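/- For the quantized torus product, with f(θ₁,φ₁) = exp(iφ₁) and g(θ₂,φ₂) = exp(iθ₂), the limit defining (f ⋆_ℏ g)(θ,φ) exists for every (θ,φ) ∈ ℝ² and every ℏ > 0, and equals exp(−iℏ)·exp(iθ)·exp(iφ); consequently the two exponential generators satisfy the noncommutative torus relation (e^{iθ} ⋆_ℏ e^{iφ}) = exp(2iℏ)·(e^{iφ} ⋆_ℏ e^{iθ}). -/

import Mathlib

open MeasureTheory Complex Filter

/-- The torus kernel at base point `m = (θ,φ)`, on `a = (θ₁,φ₁)`, `b = (θ₂,φ₂)`: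
`exp((i/ℏ)·[(θ−θ₂)(φ−φ₁) − (φ−φ₂)(θ−θ₁)])`. -/
noncomputable def torusKernel (ℏ : ℝ) (m a b : ℝ × ℝ) : ℂ :=
  Complex.exp (Complex.I / ℏ *
    (((m.1 - b.1) * (m.2 - a.2) - (m.2 - b.2) * (m.1 - a.1) : ℝ) : ℂ))

/-- The truncated torus product `T_n(f,g)(θ,φ)`, integrating over the box `[−2πn, 2πn]⁴`. -/
noncomputable def torusT (ℏ : ℝ) (f g : ℝ × ℝ → ℂ) (n : ℕ) (m : ℝ × ℝ) : ℂ :=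
  ((2 * Real.pi * ℏ) ^ 2 : ℝ)⁻¹ •
    ∫ ab in Set.Icc (-(2 * Real.pi * n), -(2 * Real.pi * n)) (2 * Real.pi * n, 2 * Real.pi * n)
        ×ˢ Set.Icc (-(2 * Real.pi * n), -(2 * Real.pi * n)) (2 * Real.pi * n, 2 * Real.pi * n),
      f ab.1 * g ab.2 * torusKernel ℏ m ab.1 ab.2

lemma sinc_mul_eq (a z : ℝ) (hz : z ≠ 0) : a * Real.sinc (a * z) = Real.sin (a * z) / z := by
  by_cases ha : a = 0
  · simp [ha]
  · rw [Real.sinc_of_ne_zero (mul_ne_zero ha hz)]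
    field_simp

lemma inner_sine (A t : ℝ) :
    ∫ x in (0:ℝ)..A, Real.exp (-x * t) * Real.sin x =
      (1 + t ^ 2)⁻¹ - Real.exp (-A * t) * (Real.cos A + t * Real.sin A) * (1 + t ^ 2)⁻¹ := by
  have hpos : (1 + t ^ 2) ≠ 0 := by positivity
  have hd : ∀ x ∈ Set.uIcc (0:ℝ) A, HasDerivAt
      (fun x => -(Real.exp (-x * t) * (Real.cos x + t * Real.sin x) * (1 + t ^ 2)⁻¹))
      (Real.exp (-x * t) * Real.sin x) x := by
    intro x _
    have h1 : HasDerivAt (fun x : ℝ => Real.exp (-x * t)) (Real.exp (-x * t) * (-1 * t)) x :=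
      (((hasDerivAt_id x).neg).mul_const t).exp
    have h2 : HasDerivAt (fun x : ℝ => Real.cos x + t * Real.sin x)
        (-Real.sin x + t * Real.cos x) x :=
      (Real.hasDerivAt_cos x).add ((Real.hasDerivAt_sin x).const_mul t)
    have h3 := ((h1.mul h2).mul_const ((1 + t ^ 2)⁻¹)).neg
    refine h3.congr_deriv ?_
    field_simp
    ring
  rw [intervalIntegral.integral_eq_sub_of_hasDerivAt hd
    (Continuous.intervalIntegrable (by fun_prop) _ _)]
  simp
  ring

lemma integrable_exp_Ioi {x : ℝ} (hx : 0 < x) :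
    IntegrableOn (fun t : ℝ => Real.exp (-x * t)) (Set.Ioi 0) :=
  exp_neg_integrableOn_Ioi 0 hx

lemma integral_exp_Ioi {x : ℝ} (hx : 0 < x) :
    ∫ t in Set.Ioi (0:ℝ), Real.exp (-x * t) = x⁻¹ := by
  rw [integral_exp_mul_Ioi (by linarith) 0]
  simp

lemma si_eq (A : ℝ) (hA : 0 < A) :
    ∫ x in (0:ℝ)..A, Real.sinc x =
      ∫ t in Set.Ioi (0:ℝ), ∫ x in (0:ℝ)..A, Real.exp (-x * t) * Real.sin x := by
  have hnorm : ∀ x : ℝ, 0 < x →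
      ∫ t in Set.Ioi (0:ℝ), ‖Real.exp (-x * t) * Real.sin x‖ = |Real.sinc x| := by
    intro x hx
    have : (fun t : ℝ => ‖Real.exp (-x * t) * Real.sin x‖) =
        fun t => Real.exp (-x * t) * |Real.sin x| := by
      funext t
      rw [norm_mul, Real.norm_eq_abs, Real.norm_eq_abs, Real.abs_exp]
    rw [this, integral_mul_const, integral_exp_Ioi hx, Real.sinc_of_ne_zero hx.ne', abs_div,
      abs_of_pos hx]
    ring
  have hIntegrable : Integrable (Function.uncurry fun x t : ℝ => Real.exp (-x * t) * Real.sin x)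
      ((volume.restrict (Set.Ioc 0 A)).prod (volume.restrict (Set.Ioi 0))) := by
    rw [integrable_prod_iff]
    · constructor
      · filter_upwards [ae_restrict_mem measurableSet_Ioc] with x hx
        exact (integrable_exp_Ioi hx.1).mul_const (Real.sin x)
      · have h : IntegrableOn (fun x => |Real.sinc x|) (Set.Ioc 0 A) :=
          (Real.continuous_sinc.abs.integrableOn_Icc (a := 0) (b := A)).mono_set
            Set.Ioc_subset_Icc_self
        refine h.congr ?_
        filter_upwards [ae_restrict_mem measurableSet_Ioc] with x hx
        exact (hnorm x hx.1).symm
    · apply Continuous.aestronglyMeasurable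
      simp only [Function.uncurry_def]
      fun_prop
  have h := integral_integral_swap hIntegrable
  simp only [intervalIntegral.integral_of_le hA.le]
  rw [← h]
  apply setIntegral_congr_fun measurableSet_Ioc
  intro x hx
  simp only
  rw [integral_mul_const, integral_exp_Ioi hx.1, Real.sinc_of_ne_zero hx.1.ne']
  ring

lemma si_bound (A : ℝ) (hA : 0 < A) :
    |(∫ x in (0:ℝ)..A, Real.sinc x) - Real.pi / 2| ≤ 2 * A⁻¹ := by
  have hE : ∀ t ∈ Set.Ioi (0:ℝ),
      ‖Real.exp (-A * t) * (Real.cos A + t * Real.sin A) * (1 + t ^ 2)⁻¹‖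
        ≤ 2 * Real.exp (-A * t) := by
    intro t ht
    have ht' : 0 < t := ht
    rw [norm_mul, norm_mul, Real.norm_eq_abs, Real.norm_eq_abs, Real.norm_eq_abs, Real.abs_exp,
      abs_of_pos (by positivity : 0 < (1 + t ^ 2)⁻¹)]
    have h1 : |Real.cos A + t * Real.sin A| ≤ 1 + t := by
      refine (abs_add_le _ _).trans ?_
      rw [abs_mul, abs_of_pos ht']
      have := Real.abs_cos_le_one A
      have := mul_le_mul_of_nonneg_left (Real.abs_sin_le_one A) ht'.le
      linarith
    have h2 : |Real.cos A + t * Real.sin A| * (1 + t ^ 2)⁻¹ ≤ 2 := by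
      rw [← div_eq_mul_inv, div_le_iff₀ (by positivity)]
      nlinarith [sq_nonneg (t - 1)]
    have := mul_le_mul_of_nonneg_left h2 (Real.exp_pos (-A * t)).le
    linarith
  have hi2 : IntegrableOn (fun t : ℝ => 2 * Real.exp (-A * t)) (Set.Ioi 0) :=
    (integrable_exp_Ioi hA).const_mul 2
  have hiE : IntegrableOn (fun t : ℝ =>
      Real.exp (-A * t) * (Real.cos A + t * Real.sin A) * (1 + t ^ 2)⁻¹) (Set.Ioi 0) := by
    refine Integrable.mono' hi2 ?_ ?_
    · apply Measurable.aestronglyMeasurable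
      fun_prop
    · filter_upwards [ae_restrict_mem measurableSet_Ioi] with t ht
      exact hE t ht
  rw [si_eq A hA]
  simp only [inner_sine]
  rw [integral_sub integrable_inv_one_add_sq.integrableOn hiE, integral_Ioi_inv_one_add_sq]
  simp only [Real.arctan_zero, sub_zero]
  have := norm_integral_le_of_norm_le hi2
    ((ae_restrict_mem measurableSet_Ioi).mono hE)
  rw [integral_const_mul, integral_exp_Ioi hA, Real.norm_eq_abs] at this
  rw [sub_sub_cancel_left, abs_neg]
  exact this

lemma si_tendsto : Tendsto (fun A : ℝ => ∫ x in (0:ℝ)..A, Real.sinc x) atTop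
    (nhds (Real.pi / 2)) := by
  rw [tendsto_iff_norm_sub_tendsto_zero]
  have h0 : Tendsto (fun A : ℝ => 2 * A⁻¹) atTop (nhds 0) := by
    simpa using tendsto_inv_atTop_zero.const_mul (2:ℝ)
  refine squeeze_zero' (Eventually.of_forall fun _ => norm_nonneg _) ?_ h0
  filter_upwards [eventually_gt_atTop 0] with A hA
  exact si_bound A hA

lemma si_neg (A : ℝ) : ∫ x in (0:ℝ)..(-A), Real.sinc x = -∫ x in (0:ℝ)..A, Real.sinc x := by
  have := intervalIntegral.integral_comp_neg (a := 0) (b := A) Real.sinc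
  simp only [Real.sinc_neg, neg_zero] at this
  rw [intervalIntegral.integral_symm, this]

lemma si_tendsto_bot : Tendsto (fun A : ℝ => ∫ x in (0:ℝ)..A, Real.sinc x) atBot
    (nhds (-(Real.pi / 2))) := by
  have h := (si_tendsto.comp tendsto_neg_atBot_atTop).neg
  refine h.congr fun A => ?_
  simp [si_neg]

lemma inner_cexp (N w : ℝ) :
    ∫ y in (-N)..N, Complex.exp (Complex.I * ((w * y : ℝ) : ℂ)) = ((2 * N * Real.sinc (N * w) : ℝ) : ℂ) := by
  by_cases hw : w = 0
  · subst hw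
    simp
    ring
  · have h := intervalIntegral.smul_integral_comp_mul_left (a := -N) (b := N)
      (fun y : ℝ => Complex.exp (y * Complex.I)) w
    rw [mul_neg, integral_exp_mul_I_eq_sinc] at h
    have hw' : (w : ℂ) ≠ 0 := by exact_mod_cast hw
    apply mul_left_cancel₀ hw'
    simp only [mul_comm Complex.I]
    rw [← Complex.real_smul, h, mul_comm N w]
    push_cast
    ring

lemma sinc_scaled (c k a b : ℝ) (hc : c ≠ 0) :
    ∫ x in a..b, k * Real.sinc (c * k * x) =
      c⁻¹ * ((∫ x in (0:ℝ)..(c * k * b), Real.sinc x) - ∫ x in (0:ℝ)..(c * k * a), Real.sinc x) := by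
  rw [intervalIntegral.integral_interval_sub_left
    (Real.continuous_sinc.intervalIntegrable _ _) (Real.continuous_sinc.intervalIntegrable _ _),
    ← intervalIntegral.mul_integral_comp_mul_left, intervalIntegral.integral_const_mul]
  field_simp

lemma cexp_split (c t N x : ℝ) (hc : c ≠ 0) :
    Complex.exp (Complex.I * ((-(c * x * t) : ℝ) : ℂ)) * ((2 * N * Real.sinc (N * (c * x)) : ℝ) : ℂ)
      = (((N + t) * Real.sinc (c * (N + t) * x) + (N - t) * Real.sinc (c * (N - t) * x) : ℝ) : ℂ)
        + Complex.I * ((-(Real.sin (c * x * t) * (2 * N * Real.sinc (N * (c * x)))) : ℝ) : ℂ) := by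
  have hre : Real.cos (c * x * t) * (2 * N * Real.sinc (N * (c * x)))
      = (N + t) * Real.sinc (c * (N + t) * x) + (N - t) * Real.sinc (c * (N - t) * x) := by
    by_cases hx : x = 0
    · subst hx
      simp
      ring
    · have hz : c * x ≠ 0 := mul_ne_zero hc hx
      have e1 : c * (N + t) * x = (N + t) * (c * x) := by ring
      have e2 : c * (N - t) * x = (N - t) * (c * x) := by ring
      rw [e1, e2, sinc_mul_eq _ _ hz, sinc_mul_eq _ _ hz, mul_assoc 2, sinc_mul_eq _ _ hz,
        add_mul, sub_mul, Real.sin_add, Real.sin_sub, mul_comm t (c * x)]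
      ring
  rw [← hre, mul_comm Complex.I, Complex.exp_mul_I, ← Complex.ofReal_cos, ← Complex.ofReal_sin,
    Real.cos_neg, Real.sin_neg]
  push_cast
  ring

lemma real_part_tendsto (c s t : ℝ) (hc : 0 < c) :
    Tendsto (fun N : ℝ => ∫ x in (-N - s)..(N - s),
      ((N + t) * Real.sinc (c * (N + t) * x) + (N - t) * Real.sinc (c * (N - t) * x)))
      atTop (nhds (2 * Real.pi / c)) := by
  have e : ∀ N : ℝ, ∫ x in (-N - s)..(N - s),
      ((N + t) * Real.sinc (c * (N + t) * x) + (N - t) * Real.sinc (c * (N - t) * x)) =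
      c⁻¹ * ((∫ x in (0:ℝ)..(c * (N + t) * (N - s)), Real.sinc x) -
        ∫ x in (0:ℝ)..(c * (N + t) * (-N - s)), Real.sinc x) +
      c⁻¹ * ((∫ x in (0:ℝ)..(c * (N - t) * (N - s)), Real.sinc x) -
        ∫ x in (0:ℝ)..(c * (N - t) * (-N - s)), Real.sinc x) := by
    intro N
    have hcont : ∀ k : ℝ, Continuous fun x => k * Real.sinc (c * k * x) := fun k =>
      continuous_const.mul (Real.continuous_sinc.comp (by fun_prop))
    rw [intervalIntegral.integral_add ((hcont _).intervalIntegrable _ _)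
      ((hcont _).intervalIntegrable _ _), sinc_scaled _ _ _ _ hc.ne', sinc_scaled _ _ _ _ hc.ne']
  simp only [e]
  have a1 : ∀ r : ℝ, Tendsto (fun N : ℝ => c * (N + r)) atTop atTop := fun r =>
    (tendsto_atTop_add_const_right _ r tendsto_id).const_mul_atTop hc
  have a2 : Tendsto (fun N : ℝ => N - s) atTop atTop :=
    tendsto_atTop_add_const_right _ (-s) tendsto_id
  have a3 : Tendsto (fun N : ℝ => -N - s) atTop atBot :=
    tendsto_atBot_add_const_right _ (-s) tendsto_neg_atTop_atBot
  have b1 := si_tendsto.comp ((a1 t).atTop_mul_atTop₀ a2)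
  have b2 := si_tendsto_bot.comp ((a1 t).atTop_mul_atBot₀ a3)
  have b3 := si_tendsto.comp ((a1 (-t)).atTop_mul_atTop₀ a2)
  have b4 := si_tendsto_bot.comp ((a1 (-t)).atTop_mul_atBot₀ a3)
  have := ((b1.sub b2).const_mul c⁻¹).add ((b3.sub b4).const_mul c⁻¹)
  have hval : c⁻¹ * (Real.pi / 2 - -(Real.pi / 2)) + c⁻¹ * (Real.pi / 2 - -(Real.pi / 2)) =
      2 * Real.pi / c := by
    field_simp
    ring
  rw [hval] at this
  refine this.congr fun N => ?_
  simp only [Function.comp_apply, ← sub_eq_add_neg]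

lemma imag_part_tendsto (c s t : ℝ) (hc : 0 < c) :
    Tendsto (fun N : ℝ => ∫ x in (-N - s)..(N - s),
      -(Real.sin (c * x * t) * (2 * N * Real.sinc (N * (c * x))))) atTop (nhds 0) := by
  have hlim : Tendsto (fun N : ℝ => 2 / c * (N + -|s|)⁻¹ * |2 * s|) atTop (nhds 0) := by
    have h1 : Tendsto (fun N : ℝ => N + -|s|) atTop atTop :=
      tendsto_atTop_add_const_right _ _ tendsto_id
    have h2 := ((tendsto_inv_atTop_zero.comp h1).const_mul (2 / c)).mul_const |2 * s|
    simpa using h2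
  refine squeeze_zero_norm' ?_ hlim
  filter_upwards [eventually_gt_atTop |s|] with N hN
  have hN0 : 0 < N := (abs_nonneg s).trans_lt hN
  set q : ℝ → ℝ := fun x => -(Real.sin (c * x * t) * (2 * N * Real.sinc (N * (c * x)))) with hq
  have hcont : Continuous q := by
    have : Continuous fun x : ℝ => Real.sinc (N * (c * x)) :=
      Real.continuous_sinc.comp (by fun_prop)
    fun_prop
  have hodd : ∀ x, q (-x) = -q x := by
    intro x
    simp only [hq, mul_neg, neg_mul, Real.sin_neg, Real.sinc_neg]
  have hzero : ∫ x in (-N - s)..(N + s), q x = 0 := by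
    have h := intervalIntegral.integral_comp_neg (a := -N - s) (b := N + s) q
    simp only [hodd, intervalIntegral.integral_neg] at h
    have e1 : -(N + s) = -N - s := by ring
    have e2 : -(-N - s) = N + s := by ring
    rw [e1, e2] at h
    linarith
  rw [← intervalIntegral.integral_add_adjacent_intervals (b := N + s)
    (hcont.intervalIntegrable _ _) (hcont.intervalIntegrable _ _), hzero, zero_add]
  have hb := intervalIntegral.norm_integral_le_of_norm_le_const (a := N + s) (b := N - s)
    (C := 2 / c * (N + -|s|)⁻¹) (f := q) ?_
  · have e : |N - s - (N + s)| = |2 * s| := by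
      rw [← abs_neg]
      congr 1
      ring
    rwa [e] at hb
  · intro x hx
    have hx1 : N + -|s| ≤ x := by
      have h1 := hx.1.le
      have h2 : N + -|s| ≤ min (N + s) (N - s) := by
        apply le_min
        · linarith [neg_abs_le s]
        · linarith [le_abs_self s]
      exact h2.trans h1
    have hpos : 0 < N + -|s| := by linarith
    have hx0 : 0 < x := hpos.trans_le hx1
    have hz : c * x ≠ 0 := by positivity
    simp only [hq]
    rw [mul_assoc 2, sinc_mul_eq _ _ hz, norm_neg, norm_mul, norm_mul, norm_div,
      Real.norm_eq_abs, Real.norm_eq_abs, Real.norm_eq_abs, Real.norm_eq_abs,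
      abs_of_pos (by positivity : 0 < c * x), abs_of_pos (by norm_num : (0:ℝ) < 2)]
    calc |Real.sin (c * x * t)| * (2 * (|Real.sin (N * (c * x))| / (c * x)))
        ≤ 1 * (2 * (1 / (c * x))) := by
          gcongr
          · exact Real.abs_sin_le_one _
          · exact Real.abs_sin_le_one _
      _ = 2 / c * x⁻¹ := by field_simp
      _ ≤ 2 / c * (N + -|s|)⁻¹ := by gcongr

/-- The truncated double Fresnel-type integral. -/
noncomputable def dblInt (c s t N : ℝ) : ℂ :=
  ∫ x in (-N)..N, ∫ y in (-N)..N, Complex.exp (Complex.I * ((c * (x - s) * (y - t) : ℝ) : ℂ))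

lemma dblInt_tendsto_pos (c s t : ℝ) (hc : 0 < c) :
    Tendsto (dblInt c s t) atTop (nhds ((2 * Real.pi / c : ℝ) : ℂ)) := by
  have e : ∀ N : ℝ, dblInt c s t N =
      ((∫ x in (-N - s)..(N - s), ((N + t) * Real.sinc (c * (N + t) * x) +
        (N - t) * Real.sinc (c * (N - t) * x)) : ℝ) : ℂ) +
      Complex.I * ((∫ x in (-N - s)..(N - s),
        -(Real.sin (c * x * t) * (2 * N * Real.sinc (N * (c * x)))) : ℝ) : ℂ) := by
    intro N
    have hin : ∀ x : ℝ, ∫ y in (-N)..N,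
        Complex.exp (Complex.I * ((c * (x - s) * (y - t) : ℝ) : ℂ)) =
        (fun x : ℝ => (((N + t) * Real.sinc (c * (N + t) * x) +
          (N - t) * Real.sinc (c * (N - t) * x) : ℝ) : ℂ)
        + Complex.I * ((-(Real.sin (c * x * t) * (2 * N * Real.sinc (N * (c * x)))) : ℝ) : ℂ))
          (x - s) := by
      intro x
      simp only
      rw [← cexp_split _ _ _ _ hc.ne', ← inner_cexp, ← intervalIntegral.integral_const_mul]
      congr 1
      funext y
      rw [← Complex.exp_add]
      congr 1
      push_cast
      ring
    have hk : ∀ k : ℝ, Continuous fun x => Real.sinc (k * x) := fun k =>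
      Real.continuous_sinc.comp (by fun_prop)
    have hk2 : Continuous fun x => Real.sinc (N * (c * x)) :=
      Real.continuous_sinc.comp (by fun_prop)
    have h1 := hk (c * (N + t))
    have h2 := hk (c * (N - t))
    unfold dblInt
    rw [intervalIntegral.integral_congr (fun x _ => hin x)]
    refine (intervalIntegral.integral_comp_sub_right
      (fun x : ℝ => (((N + t) * Real.sinc (c * (N + t) * x) +
          (N - t) * Real.sinc (c * (N - t) * x) : ℝ) : ℂ)
        + Complex.I * ((-(Real.sin (c * x * t) * (2 * N * Real.sinc (N * (c * x)))) : ℝ) : ℂ))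
      s).trans ?_
    rw [intervalIntegral.integral_add,
      intervalIntegral.integral_const_mul, intervalIntegral.integral_ofReal,
      intervalIntegral.integral_ofReal]
    · apply Continuous.intervalIntegrable
      exact Complex.continuous_ofReal.comp (by fun_prop)
    · apply Continuous.intervalIntegrable
      exact continuous_const.mul (Complex.continuous_ofReal.comp (by fun_prop))
  have hr := (Complex.continuous_ofReal.tendsto _).comp (real_part_tendsto c s t hc)
  have hi := (Complex.continuous_ofReal.tendsto _).comp (imag_part_tendsto c s t hc)
  have h := hr.add (hi.const_mul Complex.I)
  rw [Complex.ofReal_zero, mul_zero, add_zero] at h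
  exact h.congr fun N => (e N).symm

lemma dblInt_neg (c s t N : ℝ) : dblInt (-c) s t N = dblInt c s (-t) N := by
  unfold dblInt
  congr 1
  funext x
  have h := intervalIntegral.integral_comp_neg (a := -N) (b := N)
    (fun y : ℝ => Complex.exp (Complex.I * ((c * (x - s) * (y - -t) : ℝ) : ℂ)))
  rw [neg_neg] at h
  rw [← h]
  congr 1
  funext y
  congr 3
  ring

lemma dblInt_tendsto_neg (c s t : ℝ) (hc : 0 < c) :
    Tendsto (dblInt (-c) s t) atTop (nhds ((2 * Real.pi / c : ℝ) : ℂ)) :=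
  (dblInt_tendsto_pos c s (-t) hc).congr fun N => (dblInt_neg c s t N).symm

lemma box_split (F G : ℝ → ℝ → ℂ) (hF : Continuous (Function.uncurry F))
    (hG : Continuous (Function.uncurry G)) (R : ℝ) (hR : 0 ≤ R) :
    ∫ ab in Set.Icc ((-R, -R) : ℝ × ℝ) (R, R) ×ˢ Set.Icc ((-R, -R) : ℝ × ℝ) (R, R),
      F ab.1.1 ab.2.2 * G ab.1.2 ab.2.1 =
    (∫ x in (-R)..R, ∫ y in (-R)..R, F x y) * ∫ x in (-R)..R, ∫ y in (-R)..R, G x y := by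
  have hcont : Continuous fun ab : (ℝ × ℝ) × (ℝ × ℝ) => F ab.1.1 ab.2.2 * G ab.1.2 ab.2.1 := by
    have h1 : Continuous fun ab : (ℝ × ℝ) × (ℝ × ℝ) => F ab.1.1 ab.2.2 :=
      hF.comp (f := fun ab : (ℝ × ℝ) × (ℝ × ℝ) => (ab.1.1, ab.2.2)) (by fun_prop)
    have h2 : Continuous fun ab : (ℝ × ℝ) × (ℝ × ℝ) => G ab.1.2 ab.2.1 :=
      hG.comp (f := fun ab : (ℝ × ℝ) × (ℝ × ℝ) => (ab.1.2, ab.2.1)) (by fun_prop)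
    exact h1.mul h2
  have hRR : -R ≤ R := by linarith
  rw [Measure.volume_eq_prod, setIntegral_prod _
    (hcont.continuousOn.integrableOn_compact (isCompact_Icc.prod isCompact_Icc))]
  rw [← Set.Icc_prod_Icc]
  have hin : ∀ a : ℝ × ℝ, ∫ b in Set.Icc (-R) R ×ˢ Set.Icc (-R) R, F a.1 b.2 * G a.2 b.1 =
      (∫ y in (-R)..R, F a.1 y) * ∫ y in (-R)..R, G a.2 y := by
    intro a
    rw [intervalIntegral.integral_of_le hRR, intervalIntegral.integral_of_le hRR,
      ← integral_Icc_eq_integral_Ioc, ← integral_Icc_eq_integral_Ioc, mul_comm]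
    rw [← setIntegral_prod_mul, ← Measure.volume_eq_prod]
    congr 1
    funext b
    ring
  simp only [hin]
  rw [Measure.volume_eq_prod, setIntegral_prod_mul (fun x => ∫ y in (-R)..R, F x y)
    (fun x => ∫ y in (-R)..R, G x y), integral_Icc_eq_integral_Ioc,
    integral_Icc_eq_integral_Ioc, ← intervalIntegral.integral_of_le hRR,
    ← intervalIntegral.integral_of_le hRR]

lemma torusT_eq (ℏ : ℝ) (f g : ℝ × ℝ → ℂ) (m : ℝ × ℝ) (K : ℂ) (c₁ s₁ t₁ c₂ s₂ t₂ : ℝ)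
    (h : ∀ a b : ℝ × ℝ, f a * g b * torusKernel ℏ m a b =
      K * (Complex.exp (Complex.I * ((c₁ * (a.1 - s₁) * (b.2 - t₁) : ℝ) : ℂ)) *
        Complex.exp (Complex.I * ((c₂ * (a.2 - s₂) * (b.1 - t₂) : ℝ) : ℂ)))) (n : ℕ) :
    torusT ℏ f g n m = ((2 * Real.pi * ℏ) ^ 2 : ℝ)⁻¹ •
      (K * (dblInt c₁ s₁ t₁ (2 * Real.pi * n) * dblInt c₂ s₂ t₂ (2 * Real.pi * n))) := by
  unfold torusT dblInt
  simp only [h]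
  rw [integral_const_mul, box_split
    (fun x y => Complex.exp (Complex.I * ((c₁ * (x - s₁) * (y - t₁) : ℝ) : ℂ)))
    (fun x y => Complex.exp (Complex.I * ((c₂ * (x - s₂) * (y - t₂) : ℝ) : ℂ)))]
  · simp only [Function.uncurry_def]
    fun_prop
  · simp only [Function.uncurry_def]
    fun_prop
  · positivity

lemma torusT_tendsto (ℏ : ℝ) (hℏ : 0 < ℏ) (f g : ℝ × ℝ → ℂ) (m : ℝ × ℝ) (K : ℂ)
    (s₁ t₁ s₂ t₂ : ℝ)
    (h : ∀ a b : ℝ × ℝ, f a * g b * torusKernel ℏ m a b =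
      K * (Complex.exp (Complex.I * ((-ℏ⁻¹ * (a.1 - s₁) * (b.2 - t₁) : ℝ) : ℂ)) *
        Complex.exp (Complex.I * ((ℏ⁻¹ * (a.2 - s₂) * (b.1 - t₂) : ℝ) : ℂ)))) :
    Tendsto (fun n : ℕ => torusT ℏ f g n m) atTop (nhds K) := by
  simp only [torusT_eq ℏ f g m K _ _ _ _ _ _ h]
  have hN : Tendsto (fun n : ℕ => 2 * Real.pi * (n : ℝ)) atTop atTop :=
    tendsto_natCast_atTop_atTop.const_mul_atTop (by positivity)
  have h1 := (dblInt_tendsto_neg ℏ⁻¹ s₁ t₁ (by positivity)).comp hN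
  have h2 := (dblInt_tendsto_pos ℏ⁻¹ s₂ t₂ (by positivity)).comp hN
  have h3 := ((h1.mul h2).const_mul K).const_smul ((2 * Real.pi * ℏ) ^ 2 : ℝ)⁻¹
  have hp : (Real.pi : ℂ) ≠ 0 := by exact_mod_cast Real.pi_ne_zero
  have hh : (ℏ : ℂ) ≠ 0 := by exact_mod_cast hℏ.ne'
  have hval : ((2 * Real.pi * ℏ) ^ 2 : ℝ)⁻¹ •
      (K * (((2 * Real.pi / ℏ⁻¹ : ℝ) : ℂ) * ((2 * Real.pi / ℏ⁻¹ : ℝ) : ℂ))) = K := by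
    rw [Complex.real_smul]
    push_cast
    field_simp
  rw [hval] at h3
  exact h3

lemma phi_theta_tendsto (ℏ : ℝ) (hℏ : 0 < ℏ) (θ φ : ℝ) :
    Tendsto (fun n : ℕ =>
        torusT ℏ (fun p => Complex.exp (Complex.I * (p.2 : ℂ)))
          (fun p => Complex.exp (Complex.I * (p.1 : ℂ))) n (θ, φ)) atTop
      (nhds (Complex.exp (-Complex.I * (ℏ : ℂ)) * Complex.exp (Complex.I * (θ : ℂ)) *
        Complex.exp (Complex.I * (φ : ℂ)))) := by
  refine torusT_tendsto ℏ hℏ _ _ _ _ θ φ (φ - ℏ) (θ - ℏ) ?_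
  intro a b
  have hh : (ℏ : ℂ) ≠ 0 := by exact_mod_cast hℏ.ne'
  unfold torusKernel
  simp only [← Complex.exp_add]
  congr 1
  push_cast
  field_simp
  ring

lemma theta_phi_tendsto (ℏ : ℝ) (hℏ : 0 < ℏ) (θ φ : ℝ) :
    Tendsto (fun n : ℕ =>
        torusT ℏ (fun p => Complex.exp (Complex.I * (p.1 : ℂ)))
          (fun p => Complex.exp (Complex.I * (p.2 : ℂ))) n (θ, φ)) atTop
      (nhds (Complex.exp (Complex.I * (ℏ : ℂ)) * Complex.exp (Complex.I * (θ : ℂ)) *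
        Complex.exp (Complex.I * (φ : ℂ)))) := by
  refine torusT_tendsto ℏ hℏ _ _ _ _ (θ + ℏ) (φ + ℏ) φ θ ?_
  intro a b
  have hh : (ℏ : ℂ) ≠ 0 := by exact_mod_cast hℏ.ne'
  unfold torusKernel
  simp only [← Complex.exp_add]
  congr 1
  push_cast
  field_simp
  ring

/-- Quantized torus: with `f(θ₁,φ₁) = exp(iφ₁)` and `g(θ₂,φ₂) = exp(iθ₂)`, the limit
defining `(f ⋆_ℏ g)(θ,φ)` exists and equals `exp(−iℏ)·exp(iθ)·exp(iφ)`; consequently the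
two exponential generators satisfy `e^{iθ} ⋆_ℏ e^{iφ} = exp(2iℏ)·(e^{iφ} ⋆_ℏ e^{iθ})`. -/
theorem torus_product_phi_theta (ℏ : ℝ) (hℏ : 0 < ℏ) (θ φ : ℝ) :
    Tendsto (fun n : ℕ =>
        torusT ℏ (fun p => Complex.exp (Complex.I * (p.2 : ℂ)))
          (fun p => Complex.exp (Complex.I * (p.1 : ℂ))) n (θ, φ)) atTop
      (nhds (Complex.exp (-Complex.I * (ℏ : ℂ)) * Complex.exp (Complex.I * (θ : ℂ)) *
        Complex.exp (Complex.I * (φ : ℂ)))) ∧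
    (∀ L₁ L₂ : ℂ,
      Tendsto (fun n : ℕ =>
          torusT ℏ (fun p => Complex.exp (Complex.I * (p.1 : ℂ)))
            (fun p => Complex.exp (Complex.I * (p.2 : ℂ))) n (θ, φ)) atTop (nhds L₁) →
      Tendsto (fun n : ℕ =>
          torusT ℏ (fun p => Complex.exp (Complex.I * (p.2 : ℂ)))
            (fun p => Complex.exp (Complex.I * (p.1 : ℂ))) n (θ, φ)) atTop (nhds L₂) →
      L₁ = Complex.exp (2 * Complex.I * (ℏ : ℂ)) * L₂) := by
  refine ⟨phi_theta_tendsto ℏ hℏ θ φ, ?_⟩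
  intro L₁ L₂ h₁ h₂
  rw [tendsto_nhds_unique h₁ (theta_phi_tendsto ℏ hℏ θ φ),
    tendsto_nhds_unique h₂ (phi_theta_tendsto ℏ hℏ θ φ)]
  simp only [← Complex.exp_add]
  congr 1
  ring
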